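/- Let (a_β)_{β∈ℕ^d} be a real sequence such that Σ_{β∈ℕ^d} (2|β|+d)^{2n} a_β² < ∞ for every n ∈ ℕ. Then there exists a function φ in the Schwartz space S(ℝ^d) such that ∫_{ℝ^d} φ(x) h_β(x) dx = a_β for every β ∈ ℕ^d. -/

import Mathlib

open MeasureTheory

noncomputable def hermitePoly (n : ℕ) (x : ℝ) : ℝ :=
  (-1 : ℝ) ^ n * Real.exp (x ^ 2 / 2) *
    iteratedDeriv n (fun y : ℝ => Real.exp (-(y ^ 2 / 2))) x

noncomputable def hermiteFun (n : ℕ) (x : ℝ) : ℝ :=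
  (Real.sqrt (Real.sqrt (2 * Real.pi) * n.factorial))⁻¹ *
    Real.exp (-(x ^ 2 / 4)) * hermitePoly n x

noncomputable def hermiteFunMulti (d : ℕ) (α : Fin d → ℕ) (x : EuclideanSpace ℝ (Fin d)) : ℝ :=
  ∏ i, hermiteFun (α i) (x i)

noncomputable def hermCoeff (d : ℕ) (f : EuclideanSpace ℝ (Fin d) → ℝ) (β : Fin d → ℕ) : ℝ :=
  ∫ x, f x * hermiteFunMulti d β x

/-! Multiplication by `x` and differentiation act on the Hermite functions by the ladder relations
`x h_n = √(n+1) h_{n+1} + √n h_{n-1}` and `2 h_n' = √n h_{n-1} - √(n+1) h_{n+1}`. Starting from a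
sup bound on `h_β` that is polynomial in `β`, they show by induction that every Schwartz seminorm of
`h_β` grows at most polynomially in `β`. Hence `∑ a_β h_β` converges absolutely in every seminorm,
its sum is a Schwartz function, and integrating termwise against `h_γ` isolates `a_γ` by
orthonormality. -/

open Finset Function Asymptotics
open scoped SchwartzMap ContDiff

section Polynomial

open Polynomial

theorem derivative_hermite_succ (n : ℕ) :
    derivative (hermite (n + 1)) = ((n + 1 : ℕ) : ℤ[X]) * hermite n := by
  induction n with
  | zero => simp
  | succ n ih =>
    rw [hermite_succ (n + 1), ih]
    simp only [derivative_sub, derivative_mul, derivative_X, derivative_natCast, ih]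
    rw [hermite_succ n]
    push_cast
    ring

theorem hermitePoly_eq_aeval (n : ℕ) (x : ℝ) : hermitePoly n x = aeval x (hermite n) := by
  rw [hermite_eq_deriv_gaussian', hermitePoly, iteratedDeriv_eq_iterate]
  ring

theorem aeval_derivative_hermite (n : ℕ) (x : ℝ) :
    aeval x (derivative (hermite n)) = n * hermitePoly (n - 1) x := by
  cases n with
  | zero => simp
  | succ n =>
    rw [derivative_hermite_succ, map_mul, map_natCast, Nat.add_sub_cancel, hermitePoly_eq_aeval]

theorem hermitePoly_succ (n : ℕ) (x : ℝ) :
    hermitePoly (n + 1) x = x * hermitePoly n x - n * hermitePoly (n - 1) x := by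
  rw [← aeval_derivative_hermite, hermitePoly_eq_aeval, hermitePoly_eq_aeval, hermite_succ]
  simp

theorem hasDerivAt_hermitePoly (n : ℕ) (x : ℝ) :
    HasDerivAt (hermitePoly n) (n * hermitePoly (n - 1) x) x := by
  rw [← aeval_derivative_hermite, funext (hermitePoly_eq_aeval n)]
  exact (hermite n).hasDerivAt_aeval x

theorem contDiff_hermitePoly (n : ℕ) {k : ℕ∞ω} : ContDiff ℝ k (hermitePoly n) := by
  rw [funext (hermitePoly_eq_aeval n)]
  exact (hermite n).contDiff_aeval k

theorem integrable_aeval_mul_exp_neg_mul_sq {R : Type*} [CommSemiring R] [Algebra R ℝ] (p : R[X])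
    {b : ℝ} (hb : 0 < b) : Integrable fun x : ℝ => aeval x p * Real.exp (-b * x ^ 2) := by
  induction p using Polynomial.induction_on' with
  | add p q hp hq => simpa only [map_add, add_mul] using! hp.add hq
  | monomial n a =>
    have hn : (-1 : ℝ) < n := neg_one_lt_zero.trans_le n.cast_nonneg
    simpa [aeval_monomial, mul_assoc] using
      (integrable_rpow_mul_exp_neg_mul_sq hb hn).const_mul (algebraMap R ℝ a)

end Polynomial

section HermiteFun

/-- The factor `((2π)^{1/2} n!)^{-1/2}` that normalizes the `n`-th Hermite function in `L²`. -/
noncomputable def hermiteNormalization (n : ℕ) : ℝ :=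
  (√(√(2 * Real.pi) * n.factorial))⁻¹

theorem hermiteFun_eq (n : ℕ) (x : ℝ) :
    hermiteFun n x = hermiteNormalization n * Real.exp (-(x ^ 2 / 4)) * hermitePoly n x := rfl

theorem sqrt_succ_mul_hermiteNormalization_succ (n : ℕ) :
    √(n + 1 : ℝ) * hermiteNormalization (n + 1) = hermiteNormalization n := by
  have hfact : √(2 * Real.pi) * (n + 1).factorial = (n + 1) * (√(2 * Real.pi) * n.factorial) := by
    push_cast [Nat.factorial_succ]
    ring
  rw [hermiteNormalization, hfact, Real.sqrt_mul (by positivity), mul_inv,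
    mul_inv_cancel_left₀ (by positivity), hermiteNormalization]

theorem natCast_mul_hermiteNormalization (n : ℕ) :
    n * hermiteNormalization n = √n * hermiteNormalization (n - 1) := by
  cases n with
  | zero => simp
  | succ n =>
    rw [Nat.add_sub_cancel, ← sqrt_succ_mul_hermiteNormalization_succ n, ← mul_assoc,
      Nat.cast_succ, Real.mul_self_sqrt (by positivity)]

-- At `n = 0` the junk index `n - 1 = 0` is harmless, here and below: its coefficient `√n` vanishes.
theorem self_mul_hermiteFun (n : ℕ) (x : ℝ) :
    x * hermiteFun n x = √(n + 1 : ℝ) * hermiteFun (n + 1) x + √n * hermiteFun (n - 1) x := by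
  simp only [hermiteFun_eq, hermitePoly_succ]
  linear_combination
    (-(Real.exp (-(x ^ 2 / 4)) * (x * hermitePoly n x - n * hermitePoly (n - 1) x))) *
        sqrt_succ_mul_hermiteNormalization_succ n +
      Real.exp (-(x ^ 2 / 4)) * hermitePoly (n - 1) x * natCast_mul_hermiteNormalization n

theorem hasDerivAt_hermiteFun (n : ℕ) (x : ℝ) :
    HasDerivAt (hermiteFun n)
      ((√n * hermiteFun (n - 1) x - √(n + 1 : ℝ) * hermiteFun (n + 1) x) / 2) x := by
  have hexp : HasDerivAt (fun y : ℝ => Real.exp (-(y ^ 2 / 4)))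
      (Real.exp (-(x ^ 2 / 4)) * -(2 * x / 4)) x := by
    simpa using ((hasDerivAt_pow 2 x).div_const 4).neg.exp
  refine ((hexp.const_mul (hermiteNormalization n)).mul
    (hasDerivAt_hermitePoly n x)).congr_deriv ?_
  have hx := self_mul_hermiteFun n x
  simp only [hermiteFun_eq] at hx ⊢
  linear_combination (-1 / 2) * hx +
    Real.exp (-(x ^ 2 / 4)) * hermitePoly (n - 1) x * natCast_mul_hermiteNormalization n

theorem contDiff_hermiteFun (n : ℕ) {k : ℕ∞ω} : ContDiff ℝ k (hermiteFun n) :=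
  (contDiff_const.mul (by fun_prop)).mul (contDiff_hermitePoly n)

theorem continuous_hermiteFun (n : ℕ) : Continuous (hermiteFun n) :=
  (contDiff_hermiteFun n (k := 0)).continuous

theorem exp_neg_sq_div_four_mul_self (x : ℝ) :
    Real.exp (-(x ^ 2 / 4)) * Real.exp (-(x ^ 2 / 4)) = Real.exp (-(1 / 2) * x ^ 2) := by
  rw [← Real.exp_add]
  ring_nf

theorem integrable_hermiteFun_mul (n m : ℕ) :
    Integrable fun x => hermiteFun n x * hermiteFun m x := by
  refine ((integrable_aeval_mul_exp_neg_mul_sq (Polynomial.hermite n * Polynomial.hermite m)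
    one_half_pos).const_mul (hermiteNormalization n * hermiteNormalization m)).congr
    (.of_forall fun x => ?_)
  simp only [hermiteFun_eq, hermitePoly_eq_aeval, map_mul, ← exp_neg_sq_div_four_mul_self]
  ring

theorem memLp_two_hermiteFun (n : ℕ) : MemLp (hermiteFun n) 2 :=
  (memLp_two_iff_integrable_sq (continuous_hermiteFun n).aestronglyMeasurable).2 <| by
    simpa only [sq] using integrable_hermiteFun_mul n n

/-! ### Orthonormality and sup bound in dimension one -/

theorem integral_hermiteFun_zero_mul_self : ∫ x, hermiteFun 0 x * hermiteFun 0 x = 1 := by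
  have hnorm : hermiteNormalization 0 * hermiteNormalization 0 = (√(2 * Real.pi))⁻¹ := by
    rw [hermiteNormalization, Nat.factorial_zero, Nat.cast_one, mul_one, ← mul_inv,
      Real.mul_self_sqrt (by positivity)]
  have hgauss (x : ℝ) : hermiteFun 0 x * hermiteFun 0 x =
      (√(2 * Real.pi))⁻¹ * Real.exp (-(1 / 2) * x ^ 2) := by
    rw [← hnorm, ← exp_neg_sq_div_four_mul_self, hermiteFun_eq, hermitePoly_eq_aeval]
    simp only [Polynomial.hermite_zero, map_one]
    ring
  simp only [hgauss, integral_const_mul, integral_gaussian]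
  rw [show Real.pi / (1 / 2) = 2 * Real.pi by ring]
  exact inv_mul_cancel₀ (by positivity)

-- The difference of the two sides is the integral of `(h_n h_m)'`.
theorem sqrt_succ_mul_integral_hermiteFun_succ_mul (n m : ℕ) :
    √(n + 1 : ℝ) * ∫ x, hermiteFun (n + 1) x * hermiteFun m x =
      √m * ∫ x, hermiteFun n x * hermiteFun (m - 1) x := by
  have hderiv (x : ℝ) : HasDerivAt (fun x => hermiteFun n x * hermiteFun m x)
      (√m * (hermiteFun n x * hermiteFun (m - 1) x) -
        √(n + 1 : ℝ) * (hermiteFun (n + 1) x * hermiteFun m x)) x := by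
    refine ((hasDerivAt_hermiteFun n x).mul (hasDerivAt_hermiteFun m x)).congr_deriv ?_
    linear_combination (1 / 2) * hermiteFun n x * self_mul_hermiteFun m x -
      (1 / 2) * hermiteFun m x * self_mul_hermiteFun n x
  have hlower := (integrable_hermiteFun_mul n (m - 1)).const_mul √m
  have hraise := (integrable_hermiteFun_mul (n + 1) m).const_mul √(n + 1 : ℝ)
  have hzero := integral_eq_zero_of_hasDerivAt_of_integrable hderiv (hlower.sub hraise)
    (integrable_hermiteFun_mul n m)
  rw [integral_sub hlower hraise, integral_const_mul, integral_const_mul] at hzero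
  linarith

theorem integral_hermiteFun_succ_mul_zero (n : ℕ) :
    ∫ x, hermiteFun (n + 1) x * hermiteFun 0 x = 0 := by
  have hladder := sqrt_succ_mul_integral_hermiteFun_succ_mul n 0
  rw [Nat.cast_zero, Real.sqrt_zero, zero_mul] at hladder
  exact (mul_eq_zero_iff_left (by positivity)).1 hladder

theorem integral_hermiteFun_mul (n m : ℕ) :
    ∫ x, hermiteFun n x * hermiteFun m x = if n = m then 1 else 0 := by
  induction n generalizing m with
  | zero =>
    cases m with
    | zero => simpa using integral_hermiteFun_zero_mul_self
    | succ m => simpa [mul_comm] using integral_hermiteFun_succ_mul_zero m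
  | succ n ih =>
    cases m with
    | zero => simpa using integral_hermiteFun_succ_mul_zero n
    | succ m =>
      apply mul_left_cancel₀ (show √(n + 1 : ℝ) ≠ 0 by positivity)
      rw [sqrt_succ_mul_integral_hermiteFun_succ_mul, Nat.add_sub_cancel, ih]
      by_cases h : n = m <;> simp [h]

theorem sq_le_integral_sq_add_sq_of_hasDerivAt {f f' : ℝ → ℝ} (hderiv : ∀ x, HasDerivAt f (f' x) x)
    (hf : MemLp f 2) (hf' : MemLp f' 2) (x : ℝ) : f x ^ 2 ≤ ∫ y, (f y ^ 2 + f' y ^ 2) := by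
  have hsq (y : ℝ) : HasDerivAt (fun z => f z ^ 2) (2 * (f y * f' y)) y :=
    ((hderiv y).pow 2).congr_deriv (by simp; ring)
  have hint : Integrable fun y => 2 * (f y * f' y) := (hf.integrable_mul hf').const_mul 2
  have hsum : Integrable fun y => f y ^ 2 + f' y ^ 2 := hf.integrable_sq.add hf'.integrable_sq
  have hlim := tendsto_zero_of_hasDerivAt_of_integrableOn_Iic (a := x) (fun y _ => hsq y)
    hint.integrableOn hf.integrable_sq.integrableOn
  calc f x ^ 2
      = ∫ y in Set.Iic x, 2 * (f y * f' y) := by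
        rw [integral_Iic_of_hasDerivAt_of_tendsto' (fun y _ => hsq y) hint.integrableOn hlim,
          sub_zero]
    _ ≤ ∫ y in Set.Iic x, (f y ^ 2 + f' y ^ 2) :=
        integral_mono hint.integrableOn hsum.integrableOn fun y => by
          simpa only [mul_assoc] using two_mul_le_add_sq (f y) (f' y)
    _ ≤ ∫ y, (f y ^ 2 + f' y ^ 2) :=
        setIntegral_le_integral hsum (.of_forall fun y => by positivity)

theorem integral_deriv_hermiteFun_sq (n : ℕ) :
    ∫ x, ((√n * hermiteFun (n - 1) x - √(n + 1 : ℝ) * hermiteFun (n + 1) x) / 2) ^ 2 =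
      (2 * n + 1 : ℝ) / 4 := by
  have hexpand (x : ℝ) :
      ((√n * hermiteFun (n - 1) x - √(n + 1 : ℝ) * hermiteFun (n + 1) x) / 2) ^ 2 =
        n / 4 * (hermiteFun (n - 1) x * hermiteFun (n - 1) x) +
          (n + 1) / 4 * (hermiteFun (n + 1) x * hermiteFun (n + 1) x) -
          √n * √(n + 1 : ℝ) / 2 * (hermiteFun (n - 1) x * hermiteFun (n + 1) x) := by
    linear_combination
      (hermiteFun (n - 1) x ^ 2 / 4) * Real.sq_sqrt (show (0 : ℝ) ≤ n by positivity) +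
        (hermiteFun (n + 1) x ^ 2 / 4) * Real.sq_sqrt (show (0 : ℝ) ≤ n + 1 by positivity)
  have hint (c : ℝ) (k l : ℕ) := (integrable_hermiteFun_mul k l).const_mul c
  have hsquares : Integrable fun x => n / 4 * (hermiteFun (n - 1) x * hermiteFun (n - 1) x) +
      (n + 1) / 4 * (hermiteFun (n + 1) x * hermiteFun (n + 1) x) := (hint _ _ _).add (hint _ _ _)
  rw [integral_congr_ae (.of_forall hexpand), integral_sub hsquares (hint _ _ _),
    integral_add (hint _ _ _) (hint _ _ _)]
  simp only [integral_const_mul, integral_hermiteFun_mul, if_true,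
    if_neg (show n - 1 ≠ n + 1 by omega)]
  ring

theorem abs_hermiteFun_le (n : ℕ) (x : ℝ) : |hermiteFun n x| ≤ 2 * (n + 1) := by
  have hderiv_memLp : MemLp
      (fun y => (√n * hermiteFun (n - 1) y - √(n + 1 : ℝ) * hermiteFun (n + 1) y) / 2) 2 := by
    simpa only [div_eq_inv_mul, Pi.sub_apply] using
      (((memLp_two_hermiteFun (n - 1)).const_mul √n).sub
        ((memLp_two_hermiteFun (n + 1)).const_mul √(n + 1 : ℝ))).const_mul 2⁻¹
  have hsq : hermiteFun n x ^ 2 ≤ 1 + (2 * n + 1) / 4 := by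
    refine (sq_le_integral_sq_add_sq_of_hasDerivAt (hasDerivAt_hermiteFun n)
      (memLp_two_hermiteFun n) hderiv_memLp x).trans_eq ?_
    rw [integral_add (memLp_two_hermiteFun n).integrable_sq hderiv_memLp.integrable_sq,
      integral_deriv_hermiteFun_sq]
    simp only [sq, integral_hermiteFun_mul, if_true]
  exact abs_le_of_sq_le_sq (hsq.trans (by nlinarith [n.cast_nonneg (α := ℝ)])) (by positivity)

end HermiteFun

/-! ### Polynomial growth in the multi-index -/

section PolynomialGrowth

variable {ι X : Type*} [Fintype ι]

/-- The weight `|β| + 1`, which is positive and so can measure growth in `β`; the weight `2|β| + d`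
of the theorem vanishes at `β = 0` in dimension `0`. -/
def multiWeight (β : ι → ℕ) : ℝ := ((∑ i, β i + 1 : ℕ) : ℝ)

theorem one_le_multiWeight (β : ι → ℕ) : 1 ≤ multiWeight β := by
  unfold multiWeight
  exact_mod_cast Nat.le_add_left 1 _

theorem multiWeight_pos (β : ι → ℕ) : 0 < multiWeight β :=
  zero_lt_one.trans_le (one_le_multiWeight β)

theorem apply_add_one_le_multiWeight (β : ι → ℕ) (i : ι) : (β i + 1 : ℝ) ≤ multiWeight β := by
  have := single_le_sum_of_canonicallyOrdered (f := β) (mem_univ i)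
  unfold multiWeight
  exact_mod_cast Nat.succ_le_succ this

theorem sqrt_apply_add_one_le_multiWeight (β : ι → ℕ) (i : ι) :
    √(β i + 1 : ℝ) ≤ multiWeight β :=
  (Real.sqrt_le_sqrt (apply_add_one_le_multiWeight β i)).trans
    (Real.sqrt_le_self_iff.2 (.inr (one_le_multiWeight β)))

theorem sqrt_apply_le_multiWeight (β : ι → ℕ) (i : ι) : √(β i) ≤ multiWeight β :=
  (Real.sqrt_le_sqrt (by simp)).trans (sqrt_apply_add_one_le_multiWeight β i)

theorem multiWeight_update_le [DecidableEq ι] (β : ι → ℕ) {i : ι} {m : ℕ} (hm : m ≤ β i + 1) :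
    multiWeight (update β i m) ≤ 2 * multiWeight β := by
  have hsum : ∑ j, update β i m j ≤ ∑ j, β j + 1 := by
    rw [sum_update_of_mem (mem_univ i), sum_eq_add_sum_sdiff_singleton_of_mem (mem_univ i) β]
    omega
  unfold multiWeight
  exact_mod_cast (show ∑ j, update β i m j + 1 ≤ 2 * (∑ j, β j + 1) by omega)

/-- A family of functions `A β` of `x` grows at most polynomially in the multi-index `β`,
uniformly in `x`: the filter `⊤` makes the constant uniform in both `β` and `x`. -/
def HasPolynomialGrowth (A : (ι → ℕ) → X → ℝ) : Prop :=
  ∃ M : ℕ, (fun p : (ι → ℕ) × X => A p.1 p.2) =O[⊤] fun p => multiWeight p.1 ^ M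

/-- The combination of the neighbours `A (β + e_i)` and `A (β - e_i)` of `A β` with the
coefficients of the ladder relations; it bounds the effect of `x` and of the derivative. -/
noncomputable def ladderSum [DecidableEq ι] (A : (ι → ℕ) → X → ℝ) (β : ι → ℕ) (x : X) : ℝ :=
  ∑ i, (√(β i + 1 : ℝ) * A (update β i (β i + 1)) x + √(β i) * A (update β i (β i - 1)) x)

theorem ladderSum_mul_left [DecidableEq ι] (w : X → ℝ) (A : (ι → ℕ) → X → ℝ) (β : ι → ℕ) (x : X) :
    ladderSum (fun γ y => w y * A γ y) β x = w x * ladderSum A β x := by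
  simp only [ladderSum, mul_sum, mul_add, mul_left_comm]

namespace HasPolynomialGrowth

variable {A B : (ι → ℕ) → X → ℝ}

theorem of_abs_le (hB : HasPolynomialGrowth B) (h : ∀ β x, |A β x| ≤ B β x) :
    HasPolynomialGrowth A :=
  let ⟨M, hM⟩ := hB
  ⟨M, (IsBigO.of_norm_le fun p => h p.1 p.2).trans hM⟩

theorem exists_le (hA : HasPolynomialGrowth A) :
    ∃ (C : ℝ) (M : ℕ), 0 ≤ C ∧ ∀ β x, A β x ≤ C * multiWeight β ^ M := by
  obtain ⟨M, hM⟩ := hA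
  obtain ⟨C, hC, hbound⟩ := hM.exists_nonneg
  refine ⟨C, M, hC, fun β x => (le_abs_self _).trans ?_⟩
  have hβx := Filter.eventually_top.1 hbound.bound (β, x)
  rwa [Real.norm_eq_abs, Real.norm_of_nonneg (pow_pos (multiWeight_pos β) M).le] at hβx

theorem ladderSum [DecidableEq ι] (hA : HasPolynomialGrowth A) :
    HasPolynomialGrowth (ladderSum A) := by
  obtain ⟨M, hM⟩ := hA
  refine ⟨M + 1, .fun_sum fun i _ => ?_⟩
  have hneighbour (m : ℕ → ℕ) (hm : ∀ k, m k ≤ k + 1) :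
      (fun p : (ι → ℕ) × X => A (update p.1 i (m (p.1 i))) p.2) =O[⊤]
        fun p => multiWeight p.1 ^ M := by
    have hshift : (fun p : (ι → ℕ) × X => multiWeight (update p.1 i (m (p.1 i)))) =O[⊤]
        fun p => multiWeight p.1 := .of_bound 2 <| .of_forall fun p => by
      simpa [abs_of_pos (multiWeight_pos _)] using multiWeight_update_le p.1 (hm (p.1 i))
    exact (hM.comp_tendsto (k := fun p : (ι → ℕ) × X => (update p.1 i (m (p.1 i)), p.2))
      Filter.tendsto_top).trans (hshift.pow M)
  have hcoeff (c : (ι → ℕ) → ℝ) (hc : ∀ β, √(c β) ≤ multiWeight β) :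
      (fun p : (ι → ℕ) × X => √(c p.1)) =O[⊤] fun p => multiWeight p.1 :=
    .of_norm_le fun p => (Real.norm_of_nonneg (Real.sqrt_nonneg _)).trans_le (hc p.1)
  simp only [pow_succ']
  exact ((hcoeff _ (sqrt_apply_add_one_le_multiWeight · i)).mul (hneighbour _ fun _ => le_rfl)).add
    ((hcoeff _ (sqrt_apply_le_multiWeight · i)).mul (hneighbour (· - 1) fun _ => by omega))

end HasPolynomialGrowth

end PolynomialGrowth

section HermiteFunMulti

variable {d : ℕ}

theorem hermiteFunMulti_update (β : Fin d → ℕ) (i : Fin d) (m : ℕ)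
    (x : EuclideanSpace ℝ (Fin d)) :
    hermiteFunMulti d (update β i m) x =
      hermiteFun m (x i) * ∏ j ∈ univ.erase i, hermiteFun (β j) (x j) := by
  rw [hermiteFunMulti, ← mul_prod_erase _ _ (mem_univ i), update_self]
  congr 1
  exact prod_congr rfl fun j hj => by rw [update_of_ne (ne_of_mem_erase hj)]

theorem apply_mul_hermiteFunMulti (β : Fin d → ℕ) (i : Fin d) (x : EuclideanSpace ℝ (Fin d)) :
    x i * hermiteFunMulti d β x =
      √(β i + 1 : ℝ) * hermiteFunMulti d (update β i (β i + 1)) x +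
        √(β i) * hermiteFunMulti d (update β i (β i - 1)) x := by
  have hself := hermiteFunMulti_update β i (β i) x
  rw [update_eq_self] at hself
  rw [hermiteFunMulti_update, hermiteFunMulti_update, hself]
  linear_combination (∏ j ∈ univ.erase i, hermiteFun (β j) (x j)) *
    self_mul_hermiteFun (β i) (x i)

theorem hasFDerivAt_hermiteFunMulti (β : Fin d → ℕ) (x : EuclideanSpace ℝ (Fin d)) :
    HasFDerivAt (hermiteFunMulti d β)
      (∑ i, (√(β i) / 2 * hermiteFunMulti d (update β i (β i - 1)) x -
        √(β i + 1 : ℝ) / 2 * hermiteFunMulti d (update β i (β i + 1)) x) •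
          (EuclideanSpace.proj i : EuclideanSpace ℝ (Fin d) →L[ℝ] ℝ)) x := by
  have hfactor (i : Fin d) := (hasDerivAt_hermiteFun (β i) (x i)).comp_hasFDerivAt x
    (EuclideanSpace.proj i : EuclideanSpace ℝ (Fin d) →L[ℝ] ℝ).hasFDerivAt
  refine (HasFDerivAt.finsetProd fun i (_ : i ∈ univ) => hfactor i).congr_fderiv
    (sum_congr rfl fun i _ => ?_)
  rw [hermiteFunMulti_update, hermiteFunMulti_update, smul_smul]
  congr 1
  simp only [Function.comp_apply, PiLp.proj_apply]
  ring

theorem contDiff_hermiteFunMulti (β : Fin d → ℕ) {k : ℕ∞ω} :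
    ContDiff ℝ k (hermiteFunMulti d β) :=
  contDiff_prod fun i _ =>
    (contDiff_hermiteFun (β i)).comp (EuclideanSpace.proj (𝕜 := ℝ) i).contDiff

theorem prod_hermiteFun_mul (β γ : Fin d → ℕ) (x : EuclideanSpace ℝ (Fin d)) :
    ∏ i, hermiteFun (β i) (x i) * hermiteFun (γ i) (x i) =
      hermiteFunMulti d β x * hermiteFunMulti d γ x :=
  prod_mul_distrib

theorem integral_hermiteFunMulti_mul (β γ : Fin d → ℕ) :
    ∫ x, hermiteFunMulti d β x * hermiteFunMulti d γ x = if β = γ then 1 else 0 := by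
  calc ∫ x, hermiteFunMulti d β x * hermiteFunMulti d γ x
      = ∫ x : Fin d → ℝ, ∏ i, hermiteFun (β i) (x i) * hermiteFun (γ i) (x i) := by
        rw [← (EuclideanSpace.volume_preserving_symm_measurableEquiv_toLp (Fin d)).integral_comp']
        exact integral_congr_ae (.of_forall fun x => (prod_hermiteFun_mul β γ x).symm)
    _ = ∏ i, ∫ t, hermiteFun (β i) t * hermiteFun (γ i) t :=
        integral_fintype_prod_volume_eq_prod fun i t => hermiteFun (β i) t * hermiteFun (γ i) t
    _ = if β = γ then 1 else 0 := by
        simp only [integral_hermiteFun_mul, prod_ite_zero, prod_const_one, mem_univ, true_imp_iff,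
          funext_iff]

/-! ### Seminorms of the Hermite functions -/

theorem abs_hermiteFunMulti_le (β : Fin d → ℕ) (x : EuclideanSpace ℝ (Fin d)) :
    |hermiteFunMulti d β x| ≤ 2 ^ d * multiWeight β ^ d := by
  rw [hermiteFunMulti, abs_prod, ← mul_pow]
  calc ∏ i, |hermiteFun (β i) (x i)| ≤ ∏ _i : Fin d, 2 * multiWeight β :=
        prod_le_prod (fun i _ => abs_nonneg _) fun i _ =>
          (abs_hermiteFun_le (β i) (x i)).trans (by gcongr; exact apply_add_one_le_multiWeight β i)
    _ = (2 * multiWeight β) ^ d := by simp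

theorem norm_mul_abs_hermiteFunMulti_le (β : Fin d → ℕ) (x : EuclideanSpace ℝ (Fin d)) :
    ‖x‖ * |hermiteFunMulti d β x| ≤ ladderSum (fun γ y => |hermiteFunMulti d γ y|) β x := by
  have hnorm : ‖x‖ ≤ ∑ i, |x i| := by
    refine le_of_sq_le_sq ?_ (by positivity)
    rw [EuclideanSpace.norm_sq_eq]
    exact sum_sq_le_sq_sum_of_nonneg fun i _ => abs_nonneg _
  calc ‖x‖ * |hermiteFunMulti d β x|
      ≤ (∑ i, |x i|) * |hermiteFunMulti d β x| := by gcongr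
    _ = ∑ i, |x i * hermiteFunMulti d β x| := by simp only [sum_mul, abs_mul]
    _ ≤ _ := sum_le_sum fun i _ => by
        rw [apply_mul_hermiteFunMulti]
        refine (abs_add_le _ _).trans_eq ?_
        simp only [abs_mul, abs_of_nonneg (Real.sqrt_nonneg _)]

theorem norm_iteratedFDeriv_succ_le_of_hasFDerivAt {𝕜 E F κ : Type*} [NontriviallyNormedField 𝕜]
    [NormedAddCommGroup E] [NormedSpace 𝕜 E] [NormedAddCommGroup F] [NormedSpace 𝕜 F]
    {s : Finset κ} {f : E → F} {c : κ → E → 𝕜} {L : κ → E →L[𝕜] F} {n : ℕ}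
    (hf : ∀ x, HasFDerivAt f (∑ i ∈ s, c i x • L i) x) (hc : ∀ i ∈ s, ContDiff 𝕜 n (c i)) (x : E) :
    ‖iteratedFDeriv 𝕜 (n + 1) f x‖ ≤ ∑ i ∈ s, ‖L i‖ * ‖iteratedFDeriv 𝕜 n (c i) x‖ := by
  let T (i : κ) : 𝕜 →L[𝕜] E →L[𝕜] F := .toSpanSingleton 𝕜 (L i)
  have hfderiv : fderiv 𝕜 f = fun x => ∑ i ∈ s, (T i ∘ c i) x := funext fun x => (hf x).fderiv
  rw [← norm_iteratedFDeriv_fderiv, hfderiv,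
    iteratedFDeriv_fun_sum_apply fun i hi => ((T i).contDiff.comp (hc i hi)).contDiffAt]
  refine norm_sum_le_of_le s fun i hi => ?_
  simpa [T] using (T i).norm_iteratedFDeriv_comp_left (hc i hi).contDiffAt le_rfl

theorem norm_euclideanSpace_proj_le {𝕜 ι : Type*} [RCLike 𝕜] [Fintype ι] (i : ι) :
    ‖(EuclideanSpace.proj i : EuclideanSpace 𝕜 ι →L[𝕜] 𝕜)‖ ≤ 1 :=
  ContinuousLinearMap.opNorm_le_bound _ zero_le_one fun x => by
    simpa using PiLp.norm_apply_le x i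

theorem norm_iteratedFDeriv_smul_sub_smul_le {𝕜 E F : Type*} [NontriviallyNormedField 𝕜]
    [NormedAddCommGroup E] [NormedSpace 𝕜 E] [NormedAddCommGroup F] [NormedSpace 𝕜 F] {f g : E → F}
    {n : ℕ} {x : E} (hf : ContDiffAt 𝕜 n f x) (hg : ContDiffAt 𝕜 n g x) (a b : 𝕜) :
    ‖iteratedFDeriv 𝕜 n (fun y => a • f y - b • g y) x‖ ≤
      ‖a‖ * ‖iteratedFDeriv 𝕜 n f x‖ + ‖b‖ * ‖iteratedFDeriv 𝕜 n g x‖ := by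
  rw [fun_iteratedFDeriv_sub_apply (hf.const_smul a) (hg.const_smul b),
    iteratedFDeriv_const_smul_apply' hf, iteratedFDeriv_const_smul_apply' hg, ← norm_smul,
    ← norm_smul]
  exact norm_sub_le _ _

theorem norm_iteratedFDeriv_succ_hermiteFunMulti_le (n : ℕ) (β : Fin d → ℕ)
    (x : EuclideanSpace ℝ (Fin d)) :
    ‖iteratedFDeriv ℝ (n + 1) (hermiteFunMulti d β) x‖ ≤
      ladderSum (fun γ y => ‖iteratedFDeriv ℝ n (hermiteFunMulti d γ) y‖) β x := by
  refine (norm_iteratedFDeriv_succ_le_of_hasFDerivAt (hasFDerivAt_hermiteFunMulti β)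
    (fun i _ => ?_) x).trans (sum_le_sum fun i _ => ?_)
  · exact (contDiff_const.mul (contDiff_hermiteFunMulti _)).sub
      (contDiff_const.mul (contDiff_hermiteFunMulti _))
  refine (mul_le_of_le_one_left (norm_nonneg _) (norm_euclideanSpace_proj_le i)).trans ?_
  refine (norm_iteratedFDeriv_smul_sub_smul_le (contDiff_hermiteFunMulti _).contDiffAt
    (contDiff_hermiteFunMulti _).contDiffAt _ _).trans ?_
  rw [add_comm]
  gcongr <;> exact (Real.norm_of_nonneg (by positivity)).trans_le (half_le_self (by positivity))

theorem hasPolynomialGrowth_norm_pow_mul_hermiteFunMulti (k : ℕ) :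
    HasPolynomialGrowth fun (β : Fin d → ℕ) x => ‖x‖ ^ k * |hermiteFunMulti d β x| := by
  induction k with
  | zero =>
    exact ⟨d, .of_bound (2 ^ d) <| .of_forall fun p => by
      simpa [abs_of_pos (multiWeight_pos _)] using abs_hermiteFunMulti_le p.1 p.2⟩
  | succ k ih =>
    refine ih.ladderSum.of_abs_le fun β x => ?_
    rw [abs_of_nonneg (by positivity), pow_succ, mul_assoc, ladderSum_mul_left (‖·‖ ^ k)]
    gcongr
    exact norm_mul_abs_hermiteFunMulti_le β x

theorem hasPolynomialGrowth_norm_pow_mul_iteratedFDeriv_hermiteFunMulti (k n : ℕ) :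
    HasPolynomialGrowth fun (β : Fin d → ℕ) x =>
      ‖x‖ ^ k * ‖iteratedFDeriv ℝ n (hermiteFunMulti d β) x‖ := by
  induction n with
  | zero => simpa using hasPolynomialGrowth_norm_pow_mul_hermiteFunMulti k
  | succ n ih =>
    refine ih.ladderSum.of_abs_le fun β x => ?_
    rw [abs_of_nonneg (by positivity), ladderSum_mul_left (‖·‖ ^ k)]
    gcongr
    exact norm_iteratedFDeriv_succ_hermiteFunMulti_le n β x

/-- The `d`-dimensional Hermite function `h_β` as an element of the Schwartz space. -/
noncomputable def hermiteSchwartz (β : Fin d → ℕ) : 𝓢(EuclideanSpace ℝ (Fin d), ℝ) where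
  toFun := hermiteFunMulti d β
  smooth' := contDiff_hermiteFunMulti β
  decay' k n :=
    let ⟨C, M, _, hCM⟩ := (hasPolynomialGrowth_norm_pow_mul_iteratedFDeriv_hermiteFunMulti
      (d := d) k n).exists_le
    ⟨C * multiWeight β ^ M, hCM β⟩

theorem hermiteSchwartz_apply (β : Fin d → ℕ) (x : EuclideanSpace ℝ (Fin d)) :
    hermiteSchwartz β x = hermiteFunMulti d β x := rfl

theorem exists_seminorm_hermiteSchwartz_le (d k n : ℕ) :
    ∃ (C : ℝ) (M : ℕ), ∀ β : Fin d → ℕ,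
      SchwartzMap.seminorm ℝ k n (hermiteSchwartz β) ≤ C * multiWeight β ^ M := by
  obtain ⟨C, M, hC, hCM⟩ :=
    (hasPolynomialGrowth_norm_pow_mul_iteratedFDeriv_hermiteFunMulti (d := d) k n).exists_le
  exact ⟨C, M, fun β => (hermiteSchwartz β).seminorm_le_bound ℝ k n
    (mul_nonneg hC (pow_pos (multiWeight_pos β) M).le) (hCM β)⟩

end HermiteFunMulti

/-! ### Series of Schwartz functions -/

section SchwartzSeries

variable {ι E F : Type*} [NormedAddCommGroup E] [NormedSpace ℝ E]
  [NormedAddCommGroup F] [NormedSpace ℝ F] [CompleteSpace F]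

/-- The sum of a series of Schwartz functions that converges absolutely in every Schwartz
seminorm. -/
noncomputable def schwartzTsum (f : ι → 𝓢(E, F))
    (hf : ∀ k n, Summable fun i => SchwartzMap.seminorm ℝ k n (f i)) : 𝓢(E, F) where
  toFun x := ∑' i, f i x
  smooth' := contDiff_tsum (fun i => (f i).smooth ⊤) (fun n _ => hf 0 n)
    fun n i x _ => (f i).norm_iteratedFDeriv_le_seminorm ℝ n x
  decay' k n := by
    refine ⟨∑' i, SchwartzMap.seminorm ℝ k n (f i), fun x => ?_⟩
    rw [iteratedFDeriv_tsum_apply (fun i => (f i).smooth ⊤) (fun m _ => hf 0 m)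
      (fun m i y _ => (f i).norm_iteratedFDeriv_le_seminorm ℝ m y) le_top, ← norm_norm x,
      ← norm_pow, ← norm_smul, ← tsum_const_smul'']
    exact tsum_of_norm_bounded (hf k n).hasSum fun i => by
      simpa [norm_smul] using (f i).le_seminorm ℝ k n x

theorem hasSum_schwartzTsum {f : ι → 𝓢(E, F)}
    (hf : ∀ k n, Summable fun i => SchwartzMap.seminorm ℝ k n (f i)) (x : E) :
    HasSum (fun i => f i x) (schwartzTsum f hf x) :=
  (Summable.of_norm_bounded (hf 0 0) fun i => (f i).norm_le_seminorm ℝ x).hasSum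

theorem hasSum_integral_smul_schwartzTsum [Countable ι] [MeasurableSpace E] [OpensMeasurableSpace E]
    [SecondCountableTopologyEither E F] {μ : Measure E} {g : E → ℝ} (hg : Integrable g μ)
    {f : ι → 𝓢(E, F)} (hf : ∀ k n, Summable fun i => SchwartzMap.seminorm ℝ k n (f i)) :
    HasSum (fun i => ∫ x, g x • f i x ∂μ) (∫ x, g x • schwartzTsum f hf x ∂μ) := by
  refine hasSum_integral_of_dominated_convergence
    (fun i x => ‖g x‖ * SchwartzMap.seminorm ℝ 0 0 (f i))
    (fun i => hg.aestronglyMeasurable.smul (f i).continuous.aestronglyMeasurable)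
    (fun i => .of_forall fun x => ?_) (.of_forall fun x => (hf 0 0).mul_left _) ?_
    (.of_forall fun x => (hasSum_schwartzTsum hf x).const_smul (g x))
  · rw [norm_smul]
    gcongr
    exact (f i).norm_le_seminorm ℝ x
  · simpa only [tsum_mul_left] using hg.norm.mul_const _

end SchwartzSeries

/-! ### Rapidly decreasing sequences -/

theorem summable_prod_apply_of_nonneg {ι : Type*} [Fintype ι] {κ : ι → Type*}
    {f : ∀ i, κ i → ℝ} (hf : ∀ i j, 0 ≤ f i j) (hsum : ∀ i, Summable (f i)) :
    Summable fun β : ∀ i, κ i => ∏ i, f i (β i) := by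
  classical
  refine summable_of_sum_le (c := ∏ i, ∑' j, f i j) (fun β => prod_nonneg fun i _ => hf i (β i))
    fun s => ?_
  calc ∑ β ∈ s, ∏ i, f i (β i)
      ≤ ∑ β ∈ Fintype.piFinset fun i => s.image (· i), ∏ i, f i (β i) :=
        sum_le_sum_of_subset_of_nonneg
          (fun β hβ => Fintype.mem_piFinset.2 fun i => mem_image_of_mem _ hβ)
          fun β _ _ => prod_nonneg fun i _ => hf i (β i)
    _ = ∏ i, ∑ j ∈ s.image (· i), f i j := (prod_univ_sum _ _).symm
    _ ≤ ∏ i, ∑' j, f i j :=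
        prod_le_prod (fun i _ => sum_nonneg fun j _ => hf i j) fun i _ =>
          (hsum i).sum_le_tsum _ fun j _ => hf i j

theorem summable_inv_multiWeight_pow (ι : Type*) [Fintype ι] :
    Summable fun β : ι → ℕ => (multiWeight β ^ (2 * Fintype.card ι))⁻¹ := by
  have hfactor : Summable fun n : ℕ => (((n : ℝ) + 1) ^ 2)⁻¹ := by
    simpa using (summable_nat_add_iff 1).2 (Real.summable_nat_pow_inv.2 one_lt_two)
  refine .of_nonneg_of_le (fun β => by have := multiWeight_pos β; positivity) (fun β => ?_)
    (summable_prod_apply_of_nonneg (fun (_ : ι) n => by positivity) fun _ => hfactor)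
  rw [prod_inv_distrib]
  gcongr
  calc ∏ i, ((β i : ℝ) + 1) ^ 2 ≤ ∏ _i : ι, multiWeight β ^ 2 :=
        prod_le_prod (fun i _ => by positivity) fun i _ => by
          gcongr
          exact apply_add_one_le_multiWeight β i
    _ = multiWeight β ^ (2 * Fintype.card ι) := by simp [pow_mul]

theorem summable_abs_mul_multiWeight_pow {ι : Type*} [Fintype ι] {a : (ι → ℕ) → ℝ}
    (ha : ∀ n : ℕ, Summable fun β => multiWeight β ^ (2 * n) * a β ^ 2) (M : ℕ) :
    Summable fun β => |a β| * multiWeight β ^ M := by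
  set D := Fintype.card ι
  refine .of_nonneg_of_le (fun β => by have := multiWeight_pos β; positivity) (fun β => ?_)
    ((ha (M + D)).add (summable_inv_multiWeight_pow ι))
  have hw := multiWeight_pos β
  calc |a β| * multiWeight β ^ M
      = (multiWeight β ^ (M + D) * |a β|) * (multiWeight β ^ D)⁻¹ := by
        rw [pow_add]
        field_simp
    _ ≤ 2 * (multiWeight β ^ (M + D) * |a β|) * (multiWeight β ^ D)⁻¹ := by
        rw [mul_assoc 2]
        exact le_mul_of_one_le_left (by positivity) one_le_two
    _ ≤ (multiWeight β ^ (M + D) * |a β|) ^ 2 + ((multiWeight β ^ D)⁻¹) ^ 2 :=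
        two_mul_le_add_sq _ _
    _ = multiWeight β ^ (2 * (M + D)) * a β ^ 2 + (multiWeight β ^ (2 * D))⁻¹ := by
        rw [mul_pow, sq_abs, inv_pow, ← pow_mul', ← pow_mul']

theorem multiWeight_le_two_mul_sum_add {d : ℕ} (hd : d ≠ 0) (β : Fin d → ℕ) :
    multiWeight β ≤ ((2 * ∑ i, β i + d : ℕ) : ℝ) := by
  unfold multiWeight
  exact_mod_cast (show ∑ i, β i + 1 ≤ 2 * ∑ i, β i + d by omega)

theorem summable_multiWeight_pow_mul_sq {d : ℕ} {a : (Fin d → ℕ) → ℝ} {n : ℕ}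
    (ha : Summable fun β : Fin d → ℕ => ((2 * ∑ i, β i + d : ℕ) : ℝ) ^ (2 * n) * a β ^ 2) :
    Summable fun β => multiWeight β ^ (2 * n) * a β ^ 2 := by
  rcases eq_or_ne d 0 with rfl | hd
  · exact .of_finite
  refine .of_nonneg_of_le (fun β => by have := multiWeight_pos β; positivity) (fun β => ?_) ha
  have hw := multiWeight_pos β
  gcongr
  exact multiWeight_le_two_mul_sum_add hd β

theorem summable_seminorm_smul_hermiteSchwartz {d : ℕ} {a : (Fin d → ℕ) → ℝ}
    (ha : ∀ M : ℕ, Summable fun β => |a β| * multiWeight β ^ M) (k n : ℕ) :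
    Summable fun β => SchwartzMap.seminorm ℝ k n (a β • hermiteSchwartz β) := by
  obtain ⟨C, M, hCM⟩ := exists_seminorm_hermiteSchwartz_le d k n
  refine .of_nonneg_of_le (fun β => apply_nonneg _ _) (fun β => ?_) ((ha M).mul_left C)
  calc SchwartzMap.seminorm ℝ k n (a β • hermiteSchwartz β)
      = |a β| * SchwartzMap.seminorm ℝ k n (hermiteSchwartz β) := map_smul_eq_mul _ _ _
    _ ≤ |a β| * (C * multiWeight β ^ M) := by
        gcongr
        exact hCM β
    _ = C * (|a β| * multiWeight β ^ M) := mul_left_comm _ _ _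

theorem integral_hermiteSchwartz_smul_smul {d : ℕ} (c : ℝ) (β γ : Fin d → ℕ) :
    ∫ x, hermiteSchwartz γ x • (c • hermiteSchwartz β) x = if β = γ then c else 0 := by
  simp only [smul_apply, smul_eq_mul, hermiteSchwartz_apply, mul_left_comm _ c, integral_const_mul,
    integral_hermiteFunMulti_mul, eq_comm (a := γ), mul_ite, mul_one, mul_zero]

/-- Every rapidly decreasing sequence indexed by multi-indices is the sequence of
Hermite coefficients of some Schwartz function. -/
theorem rapidly_decreasing_seq_is_hermite_coeffs (d : ℕ) (a : (Fin d → ℕ) → ℝ)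
    (ha : ∀ n : ℕ, Summable (fun β : Fin d → ℕ =>
      (((2 * ∑ i, β i) + d : ℕ) : ℝ) ^ (2 * n) * a β ^ 2)) :
    ∃ φ : SchwartzMap (EuclideanSpace ℝ (Fin d)) ℝ,
      ∀ β, hermCoeff d (fun z => φ z) β = a β := by
  have hweighted := summable_abs_mul_multiWeight_pow fun n => summable_multiWeight_pow_mul_sq (ha n)
  have hseminorm := summable_seminorm_smul_hermiteSchwartz hweighted
  let φ := schwartzTsum (fun β => a β • hermiteSchwartz β) hseminorm
  refine ⟨φ, fun γ => ?_⟩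
  have htermwise : HasSum (fun β => if β = γ then a β else 0)
      (∫ x, hermiteSchwartz γ x • φ x) := by
    simpa only [integral_hermiteSchwartz_smul_smul] using
      hasSum_integral_smul_schwartzTsum (μ := volume) (hermiteSchwartz γ).integrable hseminorm
  have hsingle : HasSum (fun β => if β = γ then a β else 0) (a γ) := by
    simpa using hasSum_single (f := fun β => if β = γ then a β else 0) γ fun β hβ => if_neg hβ
  calc hermCoeff d φ γ = ∫ x, hermiteSchwartz γ x • φ x := by
        simp only [hermCoeff, smul_eq_mul, hermiteSchwartz_apply, mul_comm]
    _ = a γ := htermwise.unique hsingle
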